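/- arXiv:2407.19693 — 2 statements merged into one kernel-verified Lean document; each statement's English description precedes it below -/
import Mathlib

section
/- Let k ≥ 2 and n ≥ 2k+1. For every (2k−2)-element subset G of [n−2], the set G ∪ {n−1, n} is a facet of D(n,2k−1) if and only if G satisfies Gale's evenness condition in [n−2], i.e., for all u < v with u, v ∈ [n−2] \ G, the number of elements t ∈ G with u < t < v is even. (Equivalently, the link of {n−1,n} in D(n,2k−1) is the boundary complex ∂C(n−2, 2k−2) of the cyclic polytope.) -/
/-- `F` is a facet of `Γ^J_n`: `F = I_1 ∪ … ∪ I_m ⊆ [n]`, where `I_t` is the interval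
of `J t` consecutive integers starting at `st t`, and `max I_t < min I_{t'}` for `t < t'`. -/
def GammaFacet (n m : ℕ) (J : Fin m → ℕ) (F : Finset ℕ) : Prop :=
  ∃ st : Fin m → ℕ,
    (∀ t, 1 ≤ st t ∧ st t + J t ≤ n + 1) ∧
    (∀ t t' : Fin m, t < t' → st t + J t ≤ st t') ∧
    F = Finset.univ.biUnion fun t => Finset.Ico (st t) (st t + J t)

/-!
Among the subsets of `[n]` of odd size `2k + 1` containing `n - 1` and `n`, the facets of `Γ^J_n`
for `J = (2, …, 2, 3)` are those for which every gap `u` has an even number of elements below it: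
parity forces `n - 2` into such a set, and forces the rest to split into consecutive pairs.

Hence the facets containing a given `2k`-set `T ∋ n - 1, n` are the sets `T ∪ {x}` where `x` is a
gap of `T` such that the gaps before `x` have evenly many elements of `T` below them and the gaps
after `x` oddly many. If some such `x` exists, the parities along the gaps read
`even, …, even, odd, …, odd`, and both the last even gap and the first odd gap are admissible. So
`x` is unique exactly when the parity is constant, which is Gale's evenness condition for `T` in
`[n]`. Deleting `n - 1` and `n` from `T` gives the same condition in `[n - 2]`.
-/

section Switch

variable {α : Type*} [LinearOrder α] {U : Finset α} {a : α → Prop} {u x : α}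

/-- `x` is a switching point of `a` along `U`: the predicate `a` holds at the elements of `U`
before `x` and fails at those after `x`. The value of `a` at `x` itself is left free. -/
def IsSwitch (U : Finset α) (a : α → Prop) (x : α) : Prop :=
  x ∈ U ∧ (∀ u ∈ U, u < x → a u) ∧ ∀ u ∈ U, x < u → ¬ a u

theorem IsSwitch.exists_gt (hx : IsSwitch U a x) (hax : a x) (hu : u ∈ U) (hxu : x < u) :
    ∃ y, IsSwitch U a y ∧ x < y := by
  obtain ⟨y, hy, hmin⟩ :=
    (U.filter (x < ·)).exists_min_image id ⟨u, Finset.mem_filter.2 ⟨hu, hxu⟩⟩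
  obtain ⟨hyU, hxy⟩ := Finset.mem_filter.1 hy
  refine ⟨y, ⟨hyU, fun w hw hwy => ?_, fun w hw hyw => hx.2.2 w hw (hxy.trans hyw)⟩, hxy⟩
  have hwx : w ≤ x := by
    by_contra! hxw
    exact (hmin w (Finset.mem_filter.2 ⟨hw, hxw⟩)).not_gt hwy
  rcases hwx.lt_or_eq with hwx | rfl
  · exact hx.2.1 w hw hwx
  · exact hax

theorem IsSwitch.exists_lt (hx : IsSwitch U a x) (hax : ¬ a x) (hu : u ∈ U) (hux : u < x) :
    ∃ y, IsSwitch U a y ∧ y < x := by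
  obtain ⟨y, hy, hmax⟩ :=
    (U.filter (· < x)).exists_max_image id ⟨u, Finset.mem_filter.2 ⟨hu, hux⟩⟩
  obtain ⟨hyU, hyx⟩ := Finset.mem_filter.1 hy
  refine ⟨y, ⟨hyU, fun w hw hwy => hx.2.1 w hw (hwy.trans hyx), fun w hw hyw => ?_⟩, hyx⟩
  have hxw : x ≤ w := by
    by_contra! hwx
    exact (hmax w (Finset.mem_filter.2 ⟨hw, hwx⟩)).not_gt hyw
  rcases hxw.lt_or_eq with hxw | rfl
  · exact hx.2.2 w hw hxw
  · exact hax

theorem existsUnique_isSwitch_of_forall (hU : U.Nonempty) (h : ∀ u ∈ U, a u) :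
    ∃! x, IsSwitch U a x := by
  refine ⟨U.max' hU, ⟨U.max'_mem hU, fun u hu _ => h u hu,
    fun u hu hlt => absurd (U.le_max' u hu) hlt.not_ge⟩, fun y hy => ?_⟩
  refine (U.le_max' y hy.1).eq_of_not_lt fun hlt => ?_
  exact hy.2.2 _ (U.max'_mem hU) hlt (h _ (U.max'_mem hU))

theorem existsUnique_isSwitch_of_forall_not (hU : U.Nonempty) (h : ∀ u ∈ U, ¬ a u) :
    ∃! x, IsSwitch U a x := by
  refine ⟨U.min' hU, ⟨U.min'_mem hU, fun u hu hlt => absurd (U.min'_le u hu) hlt.not_ge,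
    fun u hu _ => h u hu⟩, fun y hy => ?_⟩
  refine ((U.min'_le y hy.1).eq_of_not_lt fun hlt => ?_).symm
  exact h _ (U.min'_mem hU) (hy.2.1 _ (U.min'_mem hU) hlt)

theorem existsUnique_isSwitch_iff (hU : U.Nonempty) :
    (∃! x, IsSwitch U a x) ↔ (∀ u ∈ U, a u) ∨ ∀ u ∈ U, ¬ a u := by
  refine ⟨?_, fun h => h.elim (existsUnique_isSwitch_of_forall hU)
    (existsUnique_isSwitch_of_forall_not hU)⟩
  rintro ⟨x, hx, huniq⟩
  by_cases hax : a x
  · refine Or.inl fun u hu => ?_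
    rcases lt_trichotomy u x with hux | rfl | hxu
    · exact hx.2.1 u hu hux
    · exact hax
    · obtain ⟨y, hy, hxy⟩ := hx.exists_gt hax hu hxu
      exact absurd (huniq y hy) hxy.ne'
  · refine Or.inr fun u hu => ?_
    rcases lt_trichotomy u x with hux | rfl | hxu
    · obtain ⟨y, hy, hyx⟩ := hx.exists_lt hax hu hux
      exact absurd (huniq y hy) hyx.ne
    · exact hax
    · exact hx.2.2 u hu hxu

end Switch

theorem existsUnique_superset_iff_existsUnique_insert {α : Type*} [DecidableEq α]
    {p : Finset α → Prop} {T : Finset α} (hp : ∀ H, p H → H.card = T.card + 1) :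
    (∃! H, p H ∧ T ⊆ H) ↔ ∃! x, x ∉ T ∧ p (insert x T) := by
  constructor
  · rintro ⟨H, ⟨hH, hTH⟩, huniq⟩
    obtain ⟨x, hx, rfl⟩ := Finset.exists_eq_insert_iff.2 ⟨hTH, (hp H hH).symm⟩
    refine ⟨x, ⟨hx, hH⟩, fun y ⟨hy, hyp⟩ => ?_⟩
    exact (Finset.insert_inj hy).1 (huniq _ ⟨hyp, Finset.subset_insert y T⟩)
  · rintro ⟨x, ⟨-, hxp⟩, huniq⟩
    refine ⟨insert x T, ⟨hxp, Finset.subset_insert x T⟩, fun H ⟨hH, hTH⟩ => ?_⟩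
    obtain ⟨y, hy, rfl⟩ := Finset.exists_eq_insert_iff.2 ⟨hTH, (hp H hH).symm⟩
    rw [huniq y ⟨hy, hH⟩]

open Finset

section EvenBelowGaps

variable {n s j : ℕ} {P S : Finset ℕ}

/-- Every gap of `S` in `[n]` has an even number of elements of `S` below it. This is the form of
Gale's evenness condition that detects consecutive pairs, possibly followed by a block
ending at `n`. -/
def EvenBelowGaps (n : ℕ) (S : Finset ℕ) : Prop :=
  ∀ u ∈ Icc 1 n, u ∉ S → Even #{t ∈ S | t < u}

theorem EvenBelowGaps.filter_le (h : EvenBelowGaps n S) (hs : s ≤ n) :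
    EvenBelowGaps s {t ∈ S | t ≤ s} := by
  intro u hu huS
  rw [mem_Icc] at hu
  have hfilter : {t ∈ {t ∈ S | t ≤ s} | t < u} = {t ∈ S | t < u} := by
    ext t; simp only [mem_filter]; grind
  rw [hfilter]
  exact h u (mem_Icc.2 ⟨hu.1, hu.2.trans hs⟩) fun huS' => huS (mem_filter.2 ⟨huS', hu.2⟩)

theorem EvenBelowGaps.mem_of_odd_card (h : EvenBelowGaps n S) (hS : S ⊆ Icc 1 n)
    (hodd : Odd #S) : n ∈ S := by
  by_contra hn
  obtain ⟨t, ht⟩ := card_pos.1 hodd.pos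
  have hn1 : 1 ≤ n := (mem_Icc.1 (hS ht)).1.trans (mem_Icc.1 (hS ht)).2
  have hall : {t ∈ S | t < n} = S := filter_true_of_mem fun _ ht =>
    (mem_Icc.1 (hS ht)).2.lt_of_ne fun h => hn (h ▸ ht)
  have heven := h n (mem_Icc.2 ⟨hn1, le_rfl⟩) hn
  rw [hall] at heven
  exact Nat.not_even_iff_odd.2 hodd heven

theorem filter_le_subset_Icc (hS : S ⊆ Icc 1 n) : {t ∈ S | t ≤ s} ⊆ Icc 1 s := fun _ ht =>
  mem_Icc.2 ⟨(mem_Icc.1 (hS (mem_filter.1 ht).1)).1, (mem_filter.1 ht).2⟩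

theorem filter_le_union_Ioc (hS : S ⊆ Icc 1 n) (hIoc : Ioc s n ⊆ S) :
    {t ∈ S | t ≤ s} ∪ Ioc s n = S := by
  ext t
  have hle : t ∈ S → t ≤ n := fun ht => (mem_Icc.1 (hS ht)).2
  have hmem : s < t → t ≤ n → t ∈ S := fun h₁ h₂ => hIoc (mem_Ioc.2 ⟨h₁, h₂⟩)
  simp only [mem_union, mem_filter, mem_Ioc]
  grind

theorem union_Ioc_subset_Icc (hP : P ⊆ Icc 1 s) (hs : s + j ≤ n) :
    P ∪ Ioc s (s + j) ⊆ Icc 1 n := by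
  refine union_subset (hP.trans (Icc_subset_Icc le_rfl (by omega))) fun t ht => ?_
  rw [mem_Ioc] at ht
  exact mem_Icc.2 (by omega)

theorem card_union_Ioc (hP : P ⊆ Icc 1 s) : #(P ∪ Ioc s n) = #P + (n - s) := by
  rw [card_union_of_disjoint, Nat.card_Ioc]
  refine disjoint_left.2 fun t htP ht => ?_
  exact (mem_Icc.1 (hP htP)).2.not_gt (mem_Ioc.1 ht).1

theorem card_filter_le_add (hS : S ⊆ Icc 1 n) (hIoc : Ioc s n ⊆ S) :
    #{t ∈ S | t ≤ s} + (n - s) = #S := by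
  rw [← card_union_Ioc (filter_le_subset_Icc hS), filter_le_union_Ioc hS hIoc]

theorem EvenBelowGaps.mem_of_Ioc_subset (h : EvenBelowGaps n S) (hS : S ⊆ Icc 1 n) (hs : s ≤ n)
    (hIoc : Ioc s n ⊆ S) (hodd : Odd (#S + (n - s))) : s ∈ S := by
  refine (mem_filter.1 ((h.filter_le hs).mem_of_odd_card (filter_le_subset_Icc hS) ?_)).1
  have hcard := card_filter_le_add hS hIoc
  grind

theorem EvenBelowGaps.exists_Ioc_two_subset (h : EvenBelowGaps n S) (hS : S ⊆ Icc 1 n)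
    (hne : S.Nonempty) (heven : Even #S) :
    ∃ s, s + 2 ≤ n ∧ S ⊆ Icc 1 (s + 2) ∧ Ioc s (s + 2) ⊆ S := by
  obtain ⟨M, hM, hmax⟩ := S.exists_max_image id hne
  have hSM : S ⊆ Icc 1 M := fun t ht => mem_Icc.2 ⟨(mem_Icc.1 (hS ht)).1, hmax t ht⟩
  obtain ⟨hM1, hMn⟩ := mem_Icc.1 (hS hM)
  have hgaps : EvenBelowGaps M S := by
    simpa only [filter_true_of_mem fun _ ht => (mem_Icc.1 (hSM ht)).2] using h.filter_le hMn
  have hpred : M - 1 ∈ S := by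
    refine hgaps.mem_of_Ioc_subset hSM (Nat.sub_le M 1) (fun t ht => ?_) ?_
    · rw [mem_Ioc] at ht
      rwa [show t = M by omega]
    · rw [Nat.sub_sub_self hM1]
      exact heven.add_one
  obtain ⟨s, rfl⟩ : ∃ s, M = s + 2 := ⟨M - 2, by have := (mem_Icc.1 (hS hpred)).1; omega⟩
  refine ⟨s, hMn, hSM, fun t ht => ?_⟩
  rw [mem_Ioc] at ht
  obtain rfl | rfl : t = s + 2 - 1 ∨ t = s + 2 := by omega
  exacts [hpred, hM]

theorem EvenBelowGaps.exists_Ioc_three_subset (h : EvenBelowGaps n S) (hS : S ⊆ Icc 1 n)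
    (hpred : n - 1 ∈ S) (hn : n ∈ S) (hodd : Odd #S) : ∃ s, s + 3 = n ∧ Ioc s n ⊆ S := by
  have hn2 : 2 ≤ n := by have := (mem_Icc.1 (hS hpred)).1; omega
  have hpred2 : n - 2 ∈ S := by
    refine h.mem_of_Ioc_subset hS (Nat.sub_le n 2) (fun t ht => ?_) ?_
    · rw [mem_Ioc] at ht
      obtain rfl | rfl : t = n - 1 ∨ t = n := by omega
      exacts [hpred, hn]
    · rw [Nat.sub_sub_self hn2]
      exact hodd.add_even even_two
  refine ⟨n - 3, by have := (mem_Icc.1 (hS hpred2)).1; omega, fun t ht => ?_⟩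
  rw [mem_Ioc] at ht
  obtain rfl | rfl | rfl : t = n - 2 ∨ t = n - 1 ∨ t = n := by omega
  exacts [hpred2, hpred, hn]

theorem EvenBelowGaps.union_Ioc (hP : EvenBelowGaps s P) (hPs : P ⊆ Icc 1 s)
    (hparity : s + j = n ∨ Even (#P + j)) : EvenBelowGaps n (P ∪ Ioc s (s + j)) := by
  intro u hu hgap
  simp only [mem_Icc, mem_union, mem_Ioc, not_or, not_and_or, not_lt, not_le] at hu hgap
  by_cases hus : u ≤ s
  · have hbelow : {t ∈ P ∪ Ioc s (s + j) | t < u} = {t ∈ P | t < u} := by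
      ext t; simp only [mem_filter, mem_union, mem_Ioc]; grind
    rw [hbelow]
    exact hP u (mem_Icc.2 ⟨hu.1, hus⟩) hgap.1
  · have hbelow : {t ∈ P ∪ Ioc s (s + j) | t < u} = P ∪ Ioc s (s + j) := by
      refine filter_true_of_mem fun t ht => ?_
      have htP : t ∈ P → t ≤ s := fun htP => (mem_Icc.1 (hPs htP)).2
      rw [mem_union, mem_Ioc] at ht
      grind
    rw [hbelow, card_union_Ioc hPs, Nat.add_sub_cancel_left]
    exact hparity.resolve_left (by omega)

end EvenBelowGaps

section Facets

variable {n m s j : ℕ} {P H : Finset ℕ}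

theorem gammaFacet_succ_iff {J : Fin (m + 1) → ℕ} :
    GammaFacet n (m + 1) J H ↔ ∃ s P, s + J (Fin.last m) ≤ n ∧
      GammaFacet s m (fun t => J t.castSucc) P ∧ H = P ∪ Ioc s (s + J (Fin.last m)) := by
  have hIco (s j : ℕ) : Ico (s + 1) (s + 1 + j) = Ioc s (s + j) := by
    ext; simp only [mem_Ico, mem_Ioc]; omega
  constructor
  · rintro ⟨st, hbounds, hmono, rfl⟩
    obtain ⟨s, hs⟩ := Nat.exists_eq_add_of_le' (hbounds (Fin.last m)).1
    have hlast := (hbounds (Fin.last m)).2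
    refine ⟨s, univ.biUnion fun t : Fin m =>
      Ico (st t.castSucc) (st t.castSucc + J t.castSucc), by omega,
      ⟨fun t => st t.castSucc, fun t => ⟨(hbounds _).1, ?_⟩, fun t t' htt' =>
        hmono _ _ (Fin.castSucc_lt_castSucc_iff.2 htt'), rfl⟩, ?_⟩
    · exact hs ▸ hmono _ _ (Fin.castSucc_lt_last t)
    · ext x
      simp only [mem_biUnion, mem_univ, true_and, Fin.exists_fin_succ', mem_union, hs, hIco]
  · rintro ⟨s, P, hs, ⟨st, hbounds, hmono, rfl⟩, rfl⟩
    refine ⟨Fin.snoc st (s + 1), fun t => ?_, fun t t' htt' => ?_, ?_⟩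
    · induction t using Fin.lastCases with
      | last => simp only [Fin.snoc_last]; omega
      | cast t =>
        simpa only [Fin.snoc_castSucc] using
          ⟨(hbounds t).1, (hbounds t).2.trans (by omega)⟩
    · induction t using Fin.lastCases with
      | last => exact absurd htt' (Fin.le_last t').not_gt
      | cast t =>
        induction t' using Fin.lastCases with
        | last => simpa only [Fin.snoc_castSucc, Fin.snoc_last] using (hbounds t).2
        | cast t' =>
          simpa only [Fin.snoc_castSucc] using hmono t t' (Fin.castSucc_lt_castSucc_iff.1 htt')
    · ext x
      simp only [mem_biUnion, mem_univ, true_and, Fin.exists_fin_succ', mem_union,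
        Fin.snoc_castSucc, Fin.snoc_last, hIco]

theorem gammaFacet_pairs_iff :
    GammaFacet n m (fun _ => 2) P ↔ P ⊆ Icc 1 n ∧ #P = 2 * m ∧ EvenBelowGaps n P := by
  induction m generalizing n P with
  | zero =>
    constructor
    · rintro ⟨st, -, -, rfl⟩
      simp [EvenBelowGaps]
    · rintro ⟨-, hcard, -⟩
      obtain rfl := card_eq_zero.1 hcard
      exact ⟨Fin.elim0, fun t => t.elim0, fun t => t.elim0, by simp⟩
  | succ m ih =>
    rw [gammaFacet_succ_iff]
    constructor
    · rintro ⟨s, P, hs, hfacet, rfl⟩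
      obtain ⟨hP, hcard, hgaps⟩ := ih.1 hfacet
      refine ⟨union_Ioc_subset_Icc hP hs, ?_, hgaps.union_Ioc hP (Or.inr ?_)⟩
      · rw [card_union_Ioc hP]
        omega
      · rw [hcard]
        exact (even_two_mul m).add even_two
    · rintro ⟨hP, hcard, hgaps⟩
      obtain ⟨s, hs, hPs, hIoc⟩ := hgaps.exists_Ioc_two_subset hP (card_pos.1 (by omega))
        (hcard ▸ even_two_mul (m + 1))
      refine ⟨s, {t ∈ P | t ≤ s}, hs, ih.2 ⟨filter_le_subset_Icc hP, ?_, ?_⟩,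
        (filter_le_union_Ioc hPs hIoc).symm⟩
      · have := card_filter_le_add hPs hIoc
        omega
      · exact hgaps.filter_le (by omega)

theorem gammaFacet_pairs_triple_iff (hpred : n - 1 ∈ H) (hn : n ∈ H) :
    GammaFacet n (m + 1) (fun t => if t.val = m then 3 else 2) H ↔
      H ⊆ Icc 1 n ∧ #H = 2 * m + 3 ∧ EvenBelowGaps n H := by
  have hinit : (fun t : Fin m => if t.castSucc.val = m then 3 else 2) = fun _ => 2 :=
    funext fun t => if_neg t.isLt.ne
  rw [gammaFacet_succ_iff, hinit]
  simp only [gammaFacet_pairs_iff, Fin.val_last, if_true]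
  constructor
  · rintro ⟨s, P, hs, ⟨hP, hcard, hgaps⟩, rfl⟩
    have hsn : s + 3 = n := by
      have hle : n ∈ P → n ≤ s := fun h => (mem_Icc.1 (hP h)).2
      rw [mem_union, mem_Ioc] at hn
      grind
    refine ⟨union_Ioc_subset_Icc hP hs, ?_, hgaps.union_Ioc hP (Or.inl hsn)⟩
    rw [card_union_Ioc hP, hcard, Nat.add_sub_cancel_left]
  · rintro ⟨hH, hcard, hgaps⟩
    obtain ⟨s, rfl, hIoc⟩ := hgaps.exists_Ioc_three_subset hH hpred hn ⟨m + 1, by omega⟩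
    refine ⟨s, {t ∈ H | t ≤ s}, le_rfl, ⟨filter_le_subset_Icc hH, ?_, hgaps.filter_le (by omega)⟩,
      (filter_le_union_Ioc hH hIoc).symm⟩
    have := card_filter_le_add hH hIoc
    omega

end Facets

section Gale

variable {n m : ℕ} {T G : Finset ℕ}

/-- Gale's evenness condition for `T` in `[n]`: between any two gaps of `T` there is an even number
of elements of `T`. -/
def GaleEven (n : ℕ) (T : Finset ℕ) : Prop :=
  ∀ u v : ℕ, u ∈ Icc 1 n → v ∈ Icc 1 n → u ∉ T → v ∉ T → u < v →
    Even #{t ∈ T | u < t ∧ t < v}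

theorem even_card_between_iff {u v : ℕ} (hu : u ∉ T) (huv : u < v) :
    Even #{t ∈ T | u < t ∧ t < v} ↔ (Even #{t ∈ T | t < u} ↔ Even #{t ∈ T | t < v}) := by
  have hsplit : #{t ∈ T | t < v} = #{t ∈ T | t < u} + #{t ∈ T | u < t ∧ t < v} := by
    rw [← card_union_of_disjoint (disjoint_filter.2 fun t _ htu ht => htu.not_gt ht.1),
      ← filter_or]
    refine congrArg card (filter_congr fun t ht => ?_)
    have : t ≠ u := fun h => hu (h ▸ ht)
    omega
  rw [hsplit, Nat.even_add]
  tauto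

theorem galeEven_iff_even_or_odd_below :
    GaleEven n T ↔ (∀ u ∈ Icc 1 n \ T, Even #{t ∈ T | t < u}) ∨
      ∀ u ∈ Icc 1 n \ T, ¬ Even #{t ∈ T | t < u} := by
  simp only [mem_sdiff]
  constructor
  · intro h
    have hconst : ∀ u v, (u ∈ Icc 1 n ∧ u ∉ T) → (v ∈ Icc 1 n ∧ v ∉ T) →
        (Even #{t ∈ T | t < u} ↔ Even #{t ∈ T | t < v}) := by
      rintro u v ⟨hu, huT⟩ ⟨hv, hvT⟩
      rcases lt_trichotomy u v with huv | rfl | hvu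
      · exact (even_card_between_iff huT huv).1 (h u v hu hv huT hvT huv)
      · rfl
      · exact ((even_card_between_iff hvT hvu).1 (h v u hv hu hvT huT hvu)).symm
    by_contra! hmixed
    obtain ⟨⟨u, hu, hodd⟩, v, hv, heven⟩ := hmixed
    exact hodd ((hconst u v hu hv).2 heven)
  · intro h u v hu hv huT hvT huv
    rw [even_card_between_iff huT huv]
    rcases h with heven | hodd
    · exact iff_of_true (heven u ⟨hu, huT⟩) (heven v ⟨hv, hvT⟩)
    · exact iff_of_false (hodd u ⟨hu, huT⟩) (hodd v ⟨hv, hvT⟩)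

theorem even_card_insert_filter_lt_iff {x u : ℕ} (hx : x ∉ T) :
    Even #{t ∈ insert x T | t < u} ↔ (x < u ↔ ¬ Even #{t ∈ T | t < u}) := by
  rw [filter_insert]
  split_ifs with hxu
  · rw [card_insert_of_notMem fun h => hx (mem_filter.1 h).1, Nat.even_add_one]
    exact (iff_true_left hxu).symm
  · rw [iff_false_left hxu, not_not]

theorem evenBelowGaps_insert_iff_isSwitch {x : ℕ} (hx : x ∈ Icc 1 n \ T) :
    EvenBelowGaps n (insert x T) ↔
      IsSwitch (Icc 1 n \ T) (fun u => Even #{t ∈ T | t < u}) x := by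
  have hxT : x ∉ T := (mem_sdiff.1 hx).2
  simp only [EvenBelowGaps, IsSwitch, hx, true_and, mem_insert, not_or, mem_sdiff,
    even_card_insert_filter_lt_iff hxT]
  constructor
  · intro h
    exact ⟨fun u hu hux => not_not.1 ((h u hu.1 ⟨hux.ne, hu.2⟩).not.1 hux.not_gt),
      fun u hu hxu => (h u hu.1 ⟨hxu.ne', hu.2⟩).1 hxu⟩
  · rintro ⟨hbefore, hafter⟩ u hu ⟨hux, huT⟩
    rcases lt_or_gt_of_ne hux with hux | hxu
    · exact iff_of_false hux.not_gt (not_not.2 (hbefore u ⟨hu, huT⟩ hux))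
    · exact iff_of_true hxu (hafter u ⟨hu, huT⟩ hxu)

theorem existsUnique_evenBelowGaps_superset_iff (hT : T ⊆ Icc 1 n) (hcard : #T < n) :
    (∃! H, (H ⊆ Icc 1 n ∧ #H = #T + 1 ∧ EvenBelowGaps n H) ∧ T ⊆ H) ↔ GaleEven n T := by
  have hgap : (Icc 1 n \ T).Nonempty := by
    rw [← card_pos, card_sdiff_of_subset hT, Nat.card_Icc]
    omega
  rw [existsUnique_superset_iff_existsUnique_insert fun H hH => hH.2.1,
    galeEven_iff_even_or_odd_below, ← existsUnique_isSwitch_iff hgap]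
  refine existsUnique_congr fun x => ?_
  constructor
  · rintro ⟨hxT, hsub, -, hgaps⟩
    have hx := mem_sdiff.2 ⟨hsub (mem_insert_self x T), hxT⟩
    exact (evenBelowGaps_insert_iff_isSwitch hx).1 hgaps
  · intro hswitch
    obtain ⟨hx, hxT⟩ := mem_sdiff.1 hswitch.1
    exact ⟨hxT, insert_subset hx hT, card_insert_of_notMem hxT,
      (evenBelowGaps_insert_iff_isSwitch hswitch.1).2 hswitch⟩

theorem galeEven_union_top_iff : GaleEven n (G ∪ {n - 1, n}) ↔ GaleEven (n - 2) G := by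
  have hgap (u : ℕ) : u ∈ Icc 1 n ∧ u ∉ G ∪ {n - 1, n} ↔ u ∈ Icc 1 (n - 2) ∧ u ∉ G := by
    simp only [mem_Icc, mem_union, mem_insert, mem_singleton]
    grind
  have hbetween {u v : ℕ} (hv : v ∈ Icc 1 (n - 2)) :
      {t ∈ G ∪ {n - 1, n} | u < t ∧ t < v} = {t ∈ G | u < t ∧ t < v} := by
    ext t
    simp only [mem_Icc, mem_filter, mem_union, mem_insert, mem_singleton] at hv ⊢
    grind
  constructor
  · intro h u v hu hv huG hvG huv
    obtain ⟨hu', huT⟩ := (hgap u).2 ⟨hu, huG⟩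
    obtain ⟨hv', hvT⟩ := (hgap v).2 ⟨hv, hvG⟩
    exact hbetween hv ▸ h u v hu' hv' huT hvT huv
  · intro h u v hu hv huT hvT huv
    obtain ⟨hu', huG⟩ := (hgap u).1 ⟨hu, huT⟩
    obtain ⟨hv', hvG⟩ := (hgap v).1 ⟨hv, hvT⟩
    exact hbetween hv' ▸ h u v hu' hv' huG hvG huv

theorem existsUnique_gammaFacet_superset_iff (hT : T ⊆ Icc 1 n) (hpred : n - 1 ∈ T) (hn : n ∈ T)
    (hcardT : #T = 2 * m + 2) (hlt : #T < n) :
    (∃! H, GammaFacet n (m + 1) (fun t => if t.val = m then 3 else 2) H ∧ T ⊆ H) ↔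
      GaleEven n T := by
  rw [← existsUnique_evenBelowGaps_superset_iff hT hlt, hcardT]
  refine existsUnique_congr fun H => and_congr_left fun hTH => ?_
  exact gammaFacet_pairs_triple_iff (hTH hpred) (hTH hn)

end Gale

theorem stmt_13 (k n : ℕ) (hk : 2 ≤ k) (hn : 2 * k + 1 ≤ n)
    (G : Finset ℕ) (hG : G ⊆ Finset.Icc 1 (n - 2)) (hGcard : G.card = 2 * k - 2) :
    (∃! H : Finset ℕ,
        GammaFacet n k (fun t => if t.val = k - 1 then 3 else 2) H ∧
          G ∪ {n - 1, n} ⊆ H) ↔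
      (∀ u v : ℕ, u ∈ Finset.Icc 1 (n - 2) → v ∈ Finset.Icc 1 (n - 2) →
        u ∉ G → v ∉ G → u < v →
        Even ((G.filter fun t => u < t ∧ t < v).card)) := by
  obtain ⟨m, rfl⟩ : ∃ m, k = m + 1 := ⟨k - 1, by omega⟩
  have hG' (t : ℕ) (ht : t ∈ G) : 1 ≤ t ∧ t ≤ n - 2 := Finset.mem_Icc.1 (hG ht)
  have hT : G ∪ {n - 1, n} ⊆ Finset.Icc 1 n := fun t ht => by
    simp only [mem_union, mem_insert, mem_singleton] at ht
    grind
  have hcard : (G ∪ {n - 1, n}).card = 2 * m + 2 := by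
    rw [card_union_of_disjoint, card_pair (by omega), hGcard]
    · omega
    · refine disjoint_left.2 fun t ht => ?_
      grind
  exact (existsUnique_gammaFacet_superset_iff hT (by simp) (by simp) hcard (by omega)).trans
    galeEven_union_top_iff
end

section
/- For every integer k ≥ 2 there exists a constant C > 0 such that for all n ≥ 2k+2, the transversal number of (the set of facets of) D(n,2k) satisfies 2n/5 − C ≤ T(D(n,2k)) ≤ 2n/5 + C. -/
/-- The transversal number of the set of facets of `D(n, 2k)`: facets are the
`(2k+1)`-element subsets of `[n]` contained in exactly one facet of `Γ^J_n`,
where `J = (2,…,2,4)` has `k-1` entries `2` followed by one entry `4`. -/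
noncomputable def DEvenTransNum (n k : ℕ) : ℕ :=
  sInf {c : ℕ | ∃ S : Finset ℕ, S ⊆ Finset.Icc 1 n ∧
    (∀ F : Finset ℕ, F ⊆ Finset.Icc 1 n → F.card = 2 * k + 1 →
      (∃! G : Finset ℕ,
        GammaFacet n k (fun t => if t.val = k - 1 then 4 else 2) G ∧ F ⊆ G) →
      (S ∩ F).Nonempty) ∧ S.card = c}

/-!
A facet of `Γ^(I,4)_n` is `H ∪ {p+1, …, p+4}` with `H` a facet of `Γ^I_p` and `p + 4 ≤ n`.
Removing `p + 2` or `p + 3` from it always leaves a facet of the boundary, whereas removing `p + 1`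
does so only if the block cannot be moved one step up (`p + 4 = n`), and removing `p + 4` only if
it cannot be moved one step down (`p = 0` or `p ∈ H`).

Upper bound: `{1, n}` together with the residues `3, 4` modulo `5` is a transversal. A boundary
facet avoiding it would contain all but one point of the block, hence three consecutive numbers
with residues `0, 1, 2`, and the block could then be moved towards the missing side.

Lower bound: let `S` meet the blocks `{5i+1, …, 5i+5} ⊆ [n]`. A block meeting `S` at most once has
two consecutive points outside `S`, and four consecutive points all of which lie outside `S` but for
an interior one. If there were as many such blocks as entries in the tuple, they would carry a
boundary facet avoiding `S`; so `S` meets all but boundedly many of the blocks at least twice.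
-/

open Finset

/-- The facets of the boundary of `Γ^J_n`: the sets of one element less than a facet of `Γ^J_n`
which lie in exactly one such facet. For `J = (2, …, 2, 4)` these are the facets of `D(n, 2k)`. -/
def boundaryFacets (n : ℕ) {m : ℕ} (J : Fin m → ℕ) : Set (Finset ℕ) :=
  {F | #F + 1 = ∑ t, J t ∧ ∃! G, GammaFacet n m J G ∧ F ⊆ G}

section Transversal

variable {α : Type*} [DecidableEq α]

/-- `S` is a transversal of the family `𝓕`: it meets every member of `𝓕`. -/
def IsTransversal (𝓕 : Set (Finset α)) (S : Finset α) : Prop :=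
  ∀ F ∈ 𝓕, (S ∩ F).Nonempty

/-- The transversal number of a family of subsets of `V`: the minimum cardinality of a transversal
contained in `V`. It has the junk value `0` if there is none, that is, if `∅` is in the family. -/
noncomputable def transversalNumber (V : Finset α) (𝓕 : Set (Finset α)) : ℕ :=
  sInf {c | ∃ S ⊆ V, IsTransversal 𝓕 S ∧ #S = c}

variable {V S : Finset α} {𝓕 : Set (Finset α)}

theorem transversalNumber_le_card (hSV : S ⊆ V) (hS : IsTransversal 𝓕 S) :
    transversalNumber V 𝓕 ≤ #S :=
  Nat.sInf_le ⟨S, hSV, hS, rfl⟩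

theorem exists_isTransversal_card_eq (hSV : S ⊆ V) (hS : IsTransversal 𝓕 S) :
    ∃ T ⊆ V, IsTransversal 𝓕 T ∧ #T = transversalNumber V 𝓕 :=
  Nat.sInf_mem (s := {c | ∃ T ⊆ V, IsTransversal 𝓕 T ∧ #T = c}) ⟨#S, S, hSV, hS, rfl⟩

end Transversal

theorem biUnion_univ_castSucc {α : Type*} [DecidableEq α] {m : ℕ} (f : Fin (m + 1) → Finset α) :
    univ.biUnion f = (univ.biUnion fun t : Fin m ↦ f t.castSucc) ∪ f (Fin.last m) := by
  ext x
  simp [Fin.exists_fin_succ']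

theorem mul_card_le_card_add_mul_card_filter_inter_le {ι α : Type*} [DecidableEq α]
    (s : Finset ι) (b : ι → Finset α) (hb : (s : Set ι).PairwiseDisjoint b) (S : Finset α)
    (c : ℕ) : (c + 1) * #s ≤ #S + (c + 1) * #{i ∈ s | #(S ∩ b i) ≤ c} := by
  have hrich : (c + 1) * #{i ∈ s | ¬#(S ∩ b i) ≤ c} ≤ #S :=
    calc (c + 1) * #{i ∈ s | ¬#(S ∩ b i) ≤ c}
        ≤ ∑ i ∈ s with ¬#(S ∩ b i) ≤ c, #(S ∩ b i) := by
          rw [mul_comm, ← smul_eq_mul]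
          exact card_nsmul_le_sum _ _ _ fun i hi ↦ not_le.mp (mem_filter.mp hi).2
      _ = #({i ∈ s | ¬#(S ∩ b i) ≤ c}.biUnion fun i ↦ S ∩ b i) :=
          (card_biUnion fun i hi j hj hij ↦ (hb (mem_filter.mp hi).1 (mem_filter.mp hj).1 hij).mono
            inter_subset_right inter_subset_right).symm
      _ ≤ #S := card_le_card (biUnion_subset.mpr fun i _ ↦ inter_subset_left)
  rw [← card_filter_add_card_filter_not (s := s) (fun i ↦ #(S ∩ b i) ≤ c), mul_add]
  lia

namespace GammaFacet

variable {n m j p : ℕ} {J : Fin m → ℕ} {I : Fin m → ℕ} {G H : Finset ℕ}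

theorem card_eq (hG : GammaFacet n m J G) : #G = ∑ t, J t := by
  obtain ⟨st, -, hst, rfl⟩ := hG
  rw [card_biUnion]
  · simp only [Nat.card_Ico, Nat.add_sub_cancel_left]
  · intro t _ t' _ htt'
    rw [Function.onFun, disjoint_left]
    intro x hx hx'
    rw [mem_Ico] at hx hx'
    rcases lt_or_gt_of_ne htt' with h | h
    · have := hst t t' h
      lia
    · have := hst t' t h
      lia

theorem subset_Icc (hG : GammaFacet n m J G) : G ⊆ Icc 1 n := by
  obtain ⟨st, hst, -, rfl⟩ := hG
  refine biUnion_subset.mpr fun t _ x hx ↦ ?_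
  have := hst t
  rw [mem_Ico] at hx
  rw [mem_Icc]
  lia

theorem mono {n' : ℕ} (hn : n ≤ n') (hG : GammaFacet n m J G) : GammaFacet n' m J G := by
  obtain ⟨st, hst, hlt, rfl⟩ := hG
  exact ⟨st, fun t ↦ ⟨(hst t).1, (hst t).2.trans (by lia)⟩, hlt, rfl⟩

theorem of_succ_of_notMem (hJ : ∀ t, 1 ≤ J t) (hG : GammaFacet (n + 1) m J G) (hn : n + 1 ∉ G) :
    GammaFacet n m J G := by
  obtain ⟨st, hst, hlt, rfl⟩ := hG
  refine ⟨st, fun t ↦ ⟨(hst t).1, ?_⟩, hlt, rfl⟩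
  by_contra hend
  refine hn (mem_biUnion.mpr ⟨t, mem_univ t, mem_Ico.mpr ?_⟩)
  have := hst t
  have := hJ t
  lia

theorem union_Ioc (hH : GammaFacet p m I H) (hp : p + j ≤ n) :
    GammaFacet n (m + 1) (Fin.snoc I j) (H ∪ Ioc p (p + j)) := by
  obtain ⟨st, hst, hlt, rfl⟩ := hH
  refine ⟨Fin.snoc st (p + 1), ?_, ?_, ?_⟩
  · simp only [Fin.forall_fin_succ', Fin.snoc_castSucc, Fin.snoc_last]
    exact ⟨fun t ↦ ⟨(hst t).1, (hst t).2.trans (by lia)⟩, by lia, by lia⟩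
  · simp only [Fin.forall_fin_succ', Fin.snoc_castSucc, Fin.snoc_last, Fin.castSucc_lt_castSucc_iff]
    exact ⟨fun t ↦ ⟨hlt t, fun _ ↦ (hst t).2⟩, fun t h ↦ absurd h (Fin.castSucc_lt_last t).not_gt,
      fun h ↦ absurd h (lt_irrefl _)⟩
  · simp only [biUnion_univ_castSucc, Fin.snoc_castSucc, Fin.snoc_last]
    congr 1
    ext x
    simp only [mem_Ioc, mem_Ico]
    lia

theorem exists_eq_union_Ioc (hG : GammaFacet n (m + 1) (Fin.snoc I j) G) :
    ∃ p H, p + j ≤ n ∧ GammaFacet p m I H ∧ G = H ∪ Ioc p (p + j) := by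
  obtain ⟨st, hst, hlt, rfl⟩ := hG
  obtain ⟨p, hp⟩ := Nat.exists_eq_add_of_le' (hst (Fin.last m)).1
  have hlast := (hst (Fin.last m)).2
  simp only [Fin.snoc_last] at hlast
  refine ⟨p, univ.biUnion fun t ↦ Ico (st t.castSucc) (st t.castSucc + I t), by lia,
    ⟨fun t ↦ st t.castSucc, fun t ↦ ⟨(hst t.castSucc).1, ?_⟩, fun t t' htt' ↦ ?_, rfl⟩, ?_⟩
  · simpa only [Fin.snoc_castSucc, hp] using hlt _ _ (Fin.castSucc_lt_last t)
  · simpa only [Fin.snoc_castSucc] using hlt _ _ (Fin.castSucc_lt_castSucc_iff.mpr htt')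
  · simp only [biUnion_univ_castSucc, Fin.snoc_castSucc, Fin.snoc_last, hp]
    congr 1
    ext x
    simp only [mem_Ioc, mem_Ico]
    lia

theorem le_of_mem_union_Ioc (hH : GammaFacet p m I H) {x : ℕ} (hx : x ∈ H ∪ Ioc p (p + j)) :
    x ≤ p + j := by
  rcases mem_union.mp hx with hx | hx
  · exact (mem_Icc.mp (hH.subset_Icc hx)).2.trans (Nat.le_add_right p j)
  · exact (mem_Ioc.mp hx).2

end GammaFacet

section BoundaryFacets

variable {n m j p y : ℕ} {I : Fin m → ℕ} {H F : Finset ℕ}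

theorem subset_Icc_of_mem_boundaryFacets {J : Fin m → ℕ} (hF : F ∈ boundaryFacets n J) :
    F ⊆ Icc 1 n := by
  obtain ⟨-, G, ⟨hG, hFG⟩, -⟩ := hF
  exact hFG.trans hG.subset_Icc

theorem exists_eq_erase_of_mem_boundaryFacets {J : Fin m → ℕ} (hF : F ∈ boundaryFacets n J) :
    ∃ G, GammaFacet n m J G ∧ ∃ y ∈ G, F = G.erase y := by
  obtain ⟨hcard, G, ⟨hG, hFG⟩, -⟩ := hF
  obtain ⟨y, hyF, rfl⟩ := exists_eq_insert_iff.mpr ⟨hFG, hcard.trans hG.card_eq.symm⟩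
  exact ⟨_, hG, y, mem_insert_self y F, (erase_insert hyF).symm⟩

theorem erase_union_Ioc_mem_boundaryFacets (hH : GammaFacet p m I H) (hp : p + j ≤ n)
    (hpy : p + 1 < y) (hyp : y < p + j) :
    (H ∪ Ioc p (p + j)).erase y ∈ boundaryFacets n (Fin.snoc I j) := by
  have hG := hH.union_Ioc hp
  have hyG : y ∈ H ∪ Ioc p (p + j) := mem_union_right _ (mem_Ioc.mpr ⟨by lia, hyp.le⟩)
  have hcard : #((H ∪ Ioc p (p + j)).erase y) + 1 = ∑ t, Fin.snoc (α := fun _ ↦ ℕ) I j t := by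
    rw [card_erase_add_one hyG, hG.card_eq]
  refine ⟨hcard, _, ⟨hG, erase_subset y _⟩, ?_⟩
  rintro G' ⟨hG', hsub⟩
  obtain ⟨z, -, hzG'⟩ := exists_eq_insert_iff.mpr ⟨hsub, hcard.trans hG'.card_eq.symm⟩
  suffices hyz : y = z by rw [← hzG', ← hyz, insert_erase hyG]
  by_contra hyz
  obtain ⟨q, H', -, hH', rfl⟩ := hG'.exists_eq_union_Ioc
  have hpq : p + j ≤ q + j := hH'.le_of_mem_union_Ioc <| hsub <|
    mem_erase.mpr ⟨hyp.ne', mem_union_right _ (mem_Ioc.mpr ⟨by lia, le_rfl⟩)⟩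
  have hyq : y ≤ q := by
    by_contra hqy
    have hyG' : y ∈ H' ∪ Ioc q (q + j) := mem_union_right _ (mem_Ioc.mpr ⟨by lia, by lia⟩)
    rw [← hzG', mem_insert] at hyG'
    exact hyG'.elim hyz (notMem_erase y _)
  have eq_of_high : ∀ x ∈ Ioc q (q + j), p + j < x → x = z := by
    intro x hx hpx
    have hxG' : x ∈ H' ∪ Ioc q (q + j) := mem_union_right _ hx
    rw [← hzG', mem_insert] at hxG'
    refine hxG'.resolve_right fun hxG ↦ ?_
    exact hpx.not_ge (hH.le_of_mem_union_Ioc (mem_of_mem_erase hxG))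
  have htop : q + j = z := eq_of_high _ (mem_Ioc.mpr ⟨by lia, le_rfl⟩) (by lia)
  have hbelow : q + j - 1 = z := eq_of_high _ (mem_Ioc.mpr ⟨by lia, by lia⟩) (by lia)
  lia

theorem erase_first_union_Ioc_notMem_boundaryFacets (hH : GammaFacet p m I H) (hj : 0 < j)
    (hp : p + 1 + j ≤ n) :
    (H ∪ Ioc p (p + j)).erase (p + 1) ∉ boundaryFacets n (Fin.snoc I j) := by
  rintro ⟨-, hunique⟩
  have hsub : (H ∪ Ioc p (p + j)).erase (p + 1) ⊆ H ∪ Ioc (p + 1) (p + 1 + j) := by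
    intro x
    simp only [mem_erase, mem_union, mem_Ioc]
    lia
  have heq := hunique.unique ⟨hH.union_Ioc (by lia), erase_subset _ _⟩
    ⟨(hH.mono p.le_succ).union_Ioc hp, hsub⟩
  have htop : p + 1 + j ∈ H ∪ Ioc p (p + j) := by
    rw [heq]
    exact mem_union_right _ (mem_Ioc.mpr ⟨by lia, le_rfl⟩)
  have := hH.le_of_mem_union_Ioc htop
  lia

theorem erase_last_union_Ioc_notMem_boundaryFacets (hI : ∀ t, 1 ≤ I t)
    (hH : GammaFacet (p + 1) m I H) (hpH : p + 1 ∉ H) (hj : 0 < j) (hp : p + 1 + j ≤ n) :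
    (H ∪ Ioc (p + 1) (p + 1 + j)).erase (p + 1 + j) ∉ boundaryFacets n (Fin.snoc I j) := by
  rintro ⟨-, hunique⟩
  have hH' := hH.of_succ_of_notMem hI hpH
  have hsub : (H ∪ Ioc (p + 1) (p + 1 + j)).erase (p + 1 + j) ⊆ H ∪ Ioc p (p + j) := by
    intro x
    simp only [mem_erase, mem_union, mem_Ioc]
    lia
  have heq := hunique.unique ⟨hH.union_Ioc hp, erase_subset _ _⟩
    ⟨hH'.union_Ioc (by lia), hsub⟩
  have htop : p + 1 + j ∈ H ∪ Ioc p (p + j) := by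
    rw [← heq]
    exact mem_union_right _ (mem_Ioc.mpr ⟨by lia, le_rfl⟩)
  have := hH'.le_of_mem_union_Ioc htop
  lia

end BoundaryFacets

/-- The endpoints of `[n]` together with the residues `3` and `4` modulo `5`: a transversal of
nearly minimum size. -/
def periodicTransversal (n : ℕ) : Finset ℕ :=
  {x ∈ Icc 1 n | x = 1 ∨ x = n ∨ x % 5 = 3 ∨ x % 5 = 4}

theorem card_periodicTransversal_le (n : ℕ) : #(periodicTransversal n) ≤ 2 * (n / 5) + 4 := by
  have hsub : periodicTransversal n ⊆ {1, n} ∪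
      ((range (n / 5 + 1)).image (5 * · + 3) ∪ (range (n / 5 + 1)).image (5 * · + 4)) := by
    intro x hx
    simp only [periodicTransversal, mem_filter, mem_Icc] at hx
    simp only [mem_union, mem_insert, mem_singleton, mem_image, mem_range]
    obtain ⟨⟨-, hxn⟩, h | h | h | h⟩ := hx
    · exact .inl (.inl h)
    · exact .inl (.inr h)
    · exact .inr (.inl ⟨x / 5, by lia, by lia⟩)
    · exact .inr (.inr ⟨x / 5, by lia, by lia⟩)
  calc #(periodicTransversal n)
      ≤ 2 + (#(range (n / 5 + 1)) + #(range (n / 5 + 1))) :=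
        (card_le_card hsub).trans <| (card_union_le _ _).trans <|
          add_le_add card_le_two <| (card_union_le _ _).trans <|
            add_le_add card_image_le card_image_le
    _ = 2 * (n / 5) + 4 := by
        rw [card_range]
        lia

theorem isTransversal_periodicTransversal (n : ℕ) {m : ℕ} {I : Fin m → ℕ} (hI : ∀ t, 1 ≤ I t) :
    IsTransversal (boundaryFacets n (Fin.snoc I 4)) (periodicTransversal n) := by
  intro F hF
  by_contra hmeet
  obtain ⟨G, hG, y, -, rfl⟩ := exists_eq_erase_of_mem_boundaryFacets hF
  obtain ⟨p, H, hp, hH, rfl⟩ := hG.exists_eq_union_Ioc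
  have eq_of_mem : ∀ x ∈ H ∪ Ioc p (p + 4), x ∈ periodicTransversal n → x = y := by
    intro x hxG hxS
    by_contra hxy
    exact hmeet ⟨x, mem_inter.mpr ⟨hxS, mem_erase.mpr ⟨hxy, hxG⟩⟩⟩
  have eq_of_block : ∀ x, p < x → x ≤ p + 4 →
      (x = 1 ∨ x = n ∨ x % 5 = 3 ∨ x % 5 = 4) → x = y := fun x hpx hxp hx ↦
    eq_of_mem x (mem_union_right _ (mem_Ioc.mpr ⟨hpx, hxp⟩))
      (mem_filter.mpr ⟨mem_Icc.mpr ⟨by lia, by lia⟩, hx⟩)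
  have h₁ := eq_of_block (p + 1) (by lia) (by lia)
  have h₂ := eq_of_block (p + 2) (by lia) (by lia)
  have h₃ := eq_of_block (p + 3) (by lia) (by lia)
  have h₄ := eq_of_block (p + 4) (by lia) (by lia)
  -- A run of four residues has exactly one of `3`, `4` only if it is `4, 0, 1, 2` or `0, 1, 2, 3`.
  obtain ⟨rfl, hpn⟩ | ⟨rfl, hp0, hpmod⟩ :
      y = p + 1 ∧ p + 4 < n ∨ y = p + 4 ∧ 0 < p ∧ p % 5 = 4 := by lia
  · exact erase_first_union_Ioc_notMem_boundaryFacets hH (by lia) (by lia) hF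
  · obtain ⟨p, rfl⟩ := Nat.exists_eq_add_of_le' hp0
    refine erase_last_union_Ioc_notMem_boundaryFacets hI hH (fun hpH ↦ ?_) (by lia) hp hF
    have := eq_of_mem (p + 1) (mem_union_left _ hpH)
      (mem_filter.mpr ⟨mem_Icc.mpr ⟨by lia, by lia⟩, by lia⟩)
    lia

section LowerBound

variable {S : Finset ℕ} {a b : ℕ}

theorem exists_forall_eq_of_card_inter_Ioc_le_one (hS : #(S ∩ Ioc a b) ≤ 1) :
    ∃ s, ∀ x ∈ S, a < x → x ≤ b → x = s := by
  obtain ⟨s, hs⟩ := card_le_one_iff_subset_singleton.mp hS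
  exact ⟨s, fun x hxS hax hxb ↦
    mem_singleton.mp (hs (mem_inter.mpr ⟨hxS, mem_Ioc.mpr ⟨hax, hxb⟩⟩))⟩

theorem exists_disjoint_Ico_of_card_inter_le_one (hS : #(S ∩ Ioc a (a + 5)) ≤ 1) :
    ∃ p, a < p ∧ p + 2 ≤ a + 6 ∧ Disjoint S (Ico p (p + 2)) := by
  obtain ⟨s, eq_of_mem⟩ := exists_forall_eq_of_card_inter_Ioc_le_one hS
  obtain ⟨p, hap, hpa, hsp⟩ : ∃ p, a < p ∧ p + 2 ≤ a + 6 ∧ (s < p ∨ p + 2 ≤ s) := by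
    by_cases h : s ≤ a + 2
    · exact ⟨a + 3, by lia⟩
    · exact ⟨a + 1, by lia⟩
  refine ⟨p, hap, hpa, disjoint_left.mpr fun x hxS hx ↦ ?_⟩
  rw [mem_Ico] at hx
  have := eq_of_mem x hxS (by lia) (by lia)
  lia

theorem exists_disjoint_erase_Ioc_of_card_inter_le_one (hS : #(S ∩ Ioc a (a + 5)) ≤ 1) :
    ∃ p y, a ≤ p ∧ p + 4 ≤ a + 5 ∧ p + 1 < y ∧ y < p + 4 ∧
      Disjoint S ((Ioc p (p + 4)).erase y) := by
  obtain ⟨s, eq_of_mem⟩ := exists_forall_eq_of_card_inter_Ioc_le_one hS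
  obtain ⟨p, y, hap, hpa, hpy, hyp, hsp⟩ : ∃ p y, a ≤ p ∧ p + 4 ≤ a + 5 ∧ p + 1 < y ∧
      y < p + 4 ∧ (s ≤ p ∨ p + 4 < s ∨ s = y) := by
    by_cases h₁ : s ≤ a + 1
    · exact ⟨a + 1, a + 3, by lia⟩
    by_cases h₂ : s = a + 2
    · exact ⟨a, a + 2, by lia⟩
    by_cases h₃ : s = a + 3
    · exact ⟨a, a + 3, by lia⟩
    by_cases h₄ : s = a + 4
    · exact ⟨a + 1, a + 4, by lia⟩
    · exact ⟨a, a + 2, by lia⟩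
  refine ⟨p, y, hap, hpa, hpy, hyp, disjoint_left.mpr fun x hxS hx ↦ ?_⟩
  rw [mem_erase, mem_Ioc] at hx
  have := eq_of_mem x hxS (by lia) (by lia)
  lia

variable {m N : ℕ} {I : Fin m → ℕ} {B : Finset ℕ}

theorem exists_gammaFacet_disjoint (hI : ∀ t, I t ≤ 2) (hBN : ∀ i ∈ B, i < N)
    (hBS : ∀ i ∈ B, #(S ∩ Ioc (5 * i) (5 * i + 5)) ≤ 1) (hm : m ≤ #B) :
    ∃ H, GammaFacet (5 * N) m I H ∧ Disjoint S H := by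
  let e := B.orderEmbOfCardLe hm
  have heB : ∀ t, e t ∈ B := B.orderEmbOfCardLe_mem hm
  choose p hlow hhigh hdisj using fun t ↦
    exists_disjoint_Ico_of_card_inter_le_one (hBS (e t) (heB t))
  refine ⟨univ.biUnion fun t ↦ Ico (p t) (p t + I t), ⟨p, fun t ↦ ?_, fun t t' htt' ↦ ?_, rfl⟩, ?_⟩
  · have := hlow t
    have := hhigh t
    have := hI t
    have := hBN (e t) (heB t)
    lia
  · have := hhigh t
    have := hlow t'
    have := hI t
    have : e t < e t' := e.strictMono htt'
    lia
  · exact (disjoint_biUnion_right _ _ _).mpr fun t _ ↦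
      (hdisj t).mono_right (Ico_subset_Ico_right (Nat.add_le_add_left (hI t) _))

theorem exists_mem_boundaryFacets_disjoint {n : ℕ} (hI : ∀ t, I t ≤ 2)
    (hBn : ∀ i ∈ B, 5 * i + 5 ≤ n) (hBS : ∀ i ∈ B, #(S ∩ Ioc (5 * i) (5 * i + 5)) ≤ 1)
    (hm : m < #B) : ∃ F ∈ boundaryFacets n (Fin.snoc I 4), Disjoint S F := by
  have hB : B.Nonempty := card_pos.mp (by lia)
  have hlast := B.max'_mem hB
  obtain ⟨H, hH, hSH⟩ := exists_gammaFacet_disjoint (B := B.erase (B.max' hB)) hI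
    (fun i hi ↦ B.lt_max'_of_mem_erase_max' hB hi) (fun i hi ↦ hBS i (mem_of_mem_erase hi))
    (by rw [card_erase_of_mem hlast]; lia)
  obtain ⟨p, y, hap, hpa, hpy, hyp, hSp⟩ :=
    exists_disjoint_erase_Ioc_of_card_inter_le_one (hBS _ hlast)
  refine ⟨_, erase_union_Ioc_mem_boundaryFacets (hH.mono hap)
    (hpa.trans (hBn _ hlast)) hpy hyp, ?_⟩
  rw [erase_union_distrib]
  exact disjoint_union_right.mpr ⟨hSH.mono_right (erase_subset _ _), hSp⟩

theorem IsTransversal.two_mul_div_five_le_card_add {n : ℕ} (hI : ∀ t, I t ≤ 2)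
    (hS : IsTransversal (boundaryFacets n (Fin.snoc I 4)) S) : 2 * (n / 5) ≤ #S + 2 * m := by
  have hblocks : (range (n / 5) : Set ℕ).PairwiseDisjoint fun i ↦ Ioc (5 * i) (5 * i + 5) := by
    intro i _ i' _ hii'
    simp only [Function.onFun, disjoint_left, mem_Ioc]
    lia
  have hin (i : ℕ) (hi : i ∈ range (n / 5)) : 5 * i + 5 ≤ n := by
    rw [mem_range] at hi
    lia
  have hcount := mul_card_le_card_add_mul_card_filter_inter_le _ _ hblocks S 1
  have hsparse : #{i ∈ range (n / 5) | #(S ∩ Ioc (5 * i) (5 * i + 5)) ≤ 1} ≤ m := by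
    by_contra! hm
    obtain ⟨F, hF, hSF⟩ := exists_mem_boundaryFacets_disjoint hI
      (fun i hi ↦ hin i (mem_filter.mp hi).1)
      (fun i hi ↦ (mem_filter.mp hi).2) hm
    exact not_disjoint_iff_nonempty_inter.mpr (hS F hF) hSF
  rw [card_range] at hcount
  lia

end LowerBound

theorem stmt_15_general {m : ℕ} (I : Fin m → ℕ) (hpos : ∀ t, 1 ≤ I t) (hle : ∀ t, I t ≤ 2) :
    ∃ C : ℝ, 0 < C ∧ ∀ n : ℕ,
      2 * (n : ℝ) / 5 - C ≤ transversalNumber (Icc 1 n) (boundaryFacets n (Fin.snoc I 4)) ∧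
      transversalNumber (Icc 1 n) (boundaryFacets n (Fin.snoc I 4)) ≤ 2 * (n : ℝ) / 5 + C := by
  refine ⟨2 * m + 4, by positivity, fun n ↦ ?_⟩
  have hsub : periodicTransversal n ⊆ Icc 1 n := filter_subset _ _
  have htrans := isTransversal_periodicTransversal n hpos
  have hupper := (transversalNumber_le_card hsub htrans).trans (card_periodicTransversal_le n)
  obtain ⟨S, -, hS, hcard⟩ := exists_isTransversal_card_eq hsub htrans
  have hlower := hcard ▸ hS.two_mul_div_five_le_card_add hle
  set T := transversalNumber (Icc 1 n) (boundaryFacets n (Fin.snoc I 4))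
  have hlower' : (2 * n : ℝ) ≤ 5 * T + 10 * m + 10 := by
    exact_mod_cast (by lia : 2 * n ≤ 5 * T + 10 * m + 10)
  have hupper' : (5 * T : ℝ) ≤ 2 * n + 20 := by
    exact_mod_cast (by lia : 5 * T ≤ 2 * n + 20)
  constructor <;> linarith [(m.cast_nonneg : (0 : ℝ) ≤ m)]

theorem DEvenTransNum_succ (n m : ℕ) : DEvenTransNum n (m + 1) =
    transversalNumber (Icc 1 n) (boundaryFacets n (Fin.snoc (fun _ : Fin m ↦ 2) 4)) := by
  have htuple : (fun t : Fin (m + 1) ↦ if t.val = m + 1 - 1 then 4 else 2) =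
      Fin.snoc (fun _ : Fin m ↦ 2) 4 := by
    funext t
    refine Fin.lastCases ?_ (fun t ↦ ?_) t
    · simp
    · simp [t.isLt.ne]
  have hcard (F : Finset ℕ) : F.card = 2 * (m + 1) + 1 ↔
      #F + 1 = ∑ t, Fin.snoc (α := fun _ ↦ ℕ) (fun _ : Fin m ↦ 2) 4 t := by
    simp only [Fin.sum_snoc, sum_const, card_univ, Fintype.card_fin, smul_eq_mul]
    lia
  have htransversal (S : Finset ℕ) :
      IsTransversal (boundaryFacets n (Fin.snoc (fun _ : Fin m ↦ 2) 4)) S ↔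
      ∀ F : Finset ℕ, F ⊆ Icc 1 n → F.card = 2 * (m + 1) + 1 →
        (∃! G, GammaFacet n (m + 1) (fun t ↦ if t.val = m + 1 - 1 then 4 else 2) G ∧ F ⊆ G) →
        (S ∩ F).Nonempty := by
    simp only [htuple, hcard]
    exact ⟨fun h F _ hc hu ↦ h F ⟨hc, hu⟩,
      fun h F hF ↦ h F (subset_Icc_of_mem_boundaryFacets hF) hF.1 hF.2⟩
  simp only [DEvenTransNum, transversalNumber, htransversal]

theorem stmt_15 (k : ℕ) (hk : 2 ≤ k) :
    ∃ C : ℝ, 0 < C ∧ ∀ n : ℕ, 2 * k + 2 ≤ n →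
      2 * (n : ℝ) / 5 - C ≤ (DEvenTransNum n k : ℝ) ∧
      (DEvenTransNum n k : ℝ) ≤ 2 * (n : ℝ) / 5 + C := by
  obtain ⟨m, rfl⟩ := Nat.exists_eq_add_of_le' (one_le_two.trans hk)
  obtain ⟨C, hC, h⟩ := stmt_15_general (fun _ : Fin m ↦ 2) (fun _ ↦ one_le_two) (fun _ ↦ le_rfl)
  exact ⟨C, hC, fun n _ ↦ DEvenTransNum_succ n m ▸ h n⟩
end
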